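/- arXiv:1808.06221 — 2 statements merged into one kernel-verified Lean document; each statement's English description precedes it below -/
import Mathlib

section
/- For every positive integer m and all nonnegative integers j,k with j+k ≥ m, the weighted norm N_m(j,k) is finite and strictly positive: 0 < N_m(j,k) < ∞. -/
open MeasureTheory

/-- The weight `w_m(z) = exp(-m√(u²+1)) · ((1+√(u²+1))/u)^m` with `u = |z₁|² + |z₂|²`. -/
noncomputable def wEH (m : ℕ) (z : ℂ × ℂ) : ℝ :=
  Real.exp (-(m * Real.sqrt ((‖z.1‖ ^ 2 + ‖z.2‖ ^ 2) ^ 2 + 1))) *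
    ((1 + Real.sqrt ((‖z.1‖ ^ 2 + ‖z.2‖ ^ 2) ^ 2 + 1)) /
      (‖z.1‖ ^ 2 + ‖z.2‖ ^ 2)) ^ m

/-- `(1/π²)` times the Lebesgue measure on `ℂ² ≅ ℝ⁴`. -/
noncomputable def muEH : Measure (ℂ × ℂ) :=
  (ENNReal.ofReal (1 / Real.pi ^ 2)) • volume

/-- The weighted norm `N_m(j,k) = ∫ w_m(z) |z₁|^{2j} |z₂|^{2k} dμ(z)`. -/
noncomputable def NEH (m j k : ℕ) : ENNReal :=
  ∫⁻ z : ℂ × ℂ,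
    ENNReal.ofReal (wEH m z * ‖z.1‖ ^ (2 * j) * ‖z.2‖ ^ (2 * k)) ∂muEH


lemma EH_bound (m j k : ℕ) (hm : 0 < m) (hjk : m ≤ j + k) : ∃ C : ℝ, 0 ≤ C ∧ ∀ z : ℂ × ℂ,
    wEH m z * ‖z.1‖ ^ (2 * j) * ‖z.2‖ ^ (2 * k) ≤
      C * (Real.exp (-(1/2) * ‖z.1‖ ^ 2) * Real.exp (-(1/2) * ‖z.2‖ ^ 2)) := by
  obtain ⟨n, hn⟩ := Nat.exists_eq_add_of_le hjk
  refine ⟨2 ^ (m + n) * (m + n).factorial * Real.exp (1/2), by positivity, fun z => ?_⟩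
  unfold wEH
  rw [pow_mul, pow_mul, ← Real.exp_add]
  have ha : 0 ≤ ‖z.1‖ ^ 2 := by positivity
  have hb : 0 ≤ ‖z.2‖ ^ 2 := by positivity
  generalize ‖z.1‖ ^ 2 = a at *
  generalize ‖z.2‖ ^ 2 = b at *
  rcases (add_nonneg ha hb).eq_or_lt with h0 | hu
  · rw [← h0]
    simp only [div_zero, zero_pow hm.ne', mul_zero, zero_mul]
    positivity
  set u := a + b with hudef
  set s := Real.sqrt (u ^ 2 + 1) with hs
  have hsu : u ≤ s := Real.le_sqrt_of_sq_le (by linarith)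
  have hs1 : 1 ≤ s := Real.le_sqrt_of_sq_le (by nlinarith)
  have h1 : a ^ j * b ^ k ≤ u ^ m * u ^ n := by
    rw [← pow_add, ← hn, pow_add]
    gcongr <;> linarith
  have h2 : ((1 + s) / 2) ^ (m + n) / (m + n).factorial ≤ Real.exp ((1 + s) / 2) :=
    Real.pow_div_factorial_le_exp _ (by linarith) _
  have h3 : (1 + s) ^ (m + n) ≤ 2 ^ (m + n) * (m + n).factorial * Real.exp ((1 + s) / 2) := by
    rw [div_le_iff₀ (by positivity), div_pow, div_le_iff₀ (by positivity)] at h2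
    linarith
  have hm1 : (1 : ℝ) ≤ m := by exact_mod_cast hm
  have h4 : Real.exp (-(m * s)) ≤ Real.exp (-s) := Real.exp_le_exp.2 (by nlinarith)
  calc Real.exp (-(m * s)) * ((1 + s) / u) ^ m * a ^ j * b ^ k
      = Real.exp (-(m * s)) * ((1 + s) / u) ^ m * (a ^ j * b ^ k) := by ring
    _ ≤ Real.exp (-(m * s)) * ((1 + s) / u) ^ m * (u ^ m * u ^ n) := by gcongr
    _ = Real.exp (-(m * s)) * ((1 + s) ^ m * u ^ n) := by
        rw [div_pow]; field_simp
    _ ≤ Real.exp (-s) * ((1 + s) ^ m * (1 + s) ^ n) := by gcongr; linarith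
    _ = Real.exp (-s) * (1 + s) ^ (m + n) := by rw [pow_add]
    _ ≤ Real.exp (-s) * (2 ^ (m + n) * (m + n).factorial * Real.exp ((1 + s) / 2)) := by gcongr
    _ = 2 ^ (m + n) * (m + n).factorial * (Real.exp (-s + (1 + s) / 2)) := by
        rw [Real.exp_add]; ring
    _ ≤ 2 ^ (m + n) * (m + n).factorial * (Real.exp (1/2 + (-(1/2) * a + -(1/2) * b))) := by
        refine mul_le_mul_of_nonneg_left (Real.exp_le_exp.2 ?_) (by positivity)
        linarith
    _ = _ := by rw [Real.exp_add]; ring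

lemma EH_gauss : Integrable (fun z : ℂ => Real.exp (-(1/2) * ‖z‖ ^ 2)) := by
  have h := (GaussianFourier.integrable_cexp_neg_mul_sq_norm_add (V := ℂ) (b := 1/2)
    (by norm_num) 0 0).norm
  refine h.congr (Filter.Eventually.of_forall fun z => ?_)
  simp only [Complex.norm_exp]
  congr 1
  simp [← Complex.ofReal_pow]

lemma EH_meas (m j k : ℕ) : Measurable
    (fun z : ℂ × ℂ => ENNReal.ofReal (wEH m z * ‖z.1‖ ^ (2 * j) * ‖z.2‖ ^ (2 * k))) := by
  unfold wEH
  fun_prop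

/-- For every positive integer `m` and nonnegative integers `j,k` with `j + k ≥ m`,
the weighted norm `N_m(j,k)` is finite and strictly positive. -/
theorem NEH_pos_and_finite (m j k : ℕ) (hm : 0 < m) (hjk : m ≤ j + k) :
    0 < NEH m j k ∧ NEH m j k < ⊤ := by
  unfold NEH muEH
  rw [lintegral_smul_measure, smul_eq_mul]
  constructor
  · refine ENNReal.mul_pos (by simp [Real.pi_pos]) (ne_of_gt ?_)
    rw [lintegral_pos_iff_support (EH_meas m j k)]
    have ho : IsOpen (({0}ᶜ : Set ℂ) ×ˢ ({0}ᶜ : Set ℂ)) :=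
      isOpen_compl_singleton.prod isOpen_compl_singleton
    refine (ho.measure_pos volume ⟨(1, 1), by simp⟩).trans_le (measure_mono ?_)
    rintro ⟨x, y⟩ ⟨hx, hy⟩
    have hx : 0 < ‖x‖ := norm_pos_iff.2 hx
    have hy : 0 < ‖y‖ := norm_pos_iff.2 hy
    simp only [Function.mem_support, ne_eq, ENNReal.ofReal_eq_zero, not_le, wEH]
    positivity
  · refine ENNReal.mul_lt_top ENNReal.ofReal_lt_top ?_
    obtain ⟨C, hC, h⟩ := EH_bound m j k hm hjk
    have hi : Integrable (fun z : ℂ × ℂ =>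
        C * (Real.exp (-(1/2) * ‖z.1‖ ^ 2) * Real.exp (-(1/2) * ‖z.2‖ ^ 2))) :=
      (EH_gauss.mul_prod EH_gauss).const_mul C
    exact (lintegral_mono fun z => ENNReal.ofReal_le_ofReal (h z)).trans_lt hi.lintegral_lt_top
end

section
/- For every positive integer m, 4(m+3) · ∫₀^∞ e^{−m√(r⁴+1)} (1+√(r⁴+1))^m r³ dr ≠ m(m+1) · ∫₀^∞ e^{−m√(r⁴+1)} (1+√(r⁴+1))^m r⁷ dr. (Equivalently, 4·N_m(m,0) ≠ m·N_m(m+2,0), which is the obstruction to the balanced condition for m·g_EH obtained by comparing the coefficients of |z₁|^{2m} and |z₁|^{2(m+2)}.) -/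
open MeasureTheory

lemma bo_lim (m n : ℕ) (hm : 0 < m) :
    Filter.Tendsto (fun s : ℝ => (1 + s) ^ n * Real.exp (-(m * s))) Filter.atTop (nhds 0) := by
  have hm1 : (1:ℝ) ≤ m := by exact_mod_cast hm
  have h1 : Filter.Tendsto (fun s : ℝ => (1 + s)) Filter.atTop Filter.atTop :=
    Filter.tendsto_atTop_add_const_left _ _ Filter.tendsto_id
  have h2 := ((Real.tendsto_pow_mul_exp_neg_atTop_nhds_zero n).comp h1).mul_const (Real.exp 1)
  rw [zero_mul] at h2
  refine squeeze_zero' ?_ ?_ h2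
  · filter_upwards [Filter.eventually_ge_atTop 0] with s hs
    positivity
  · filter_upwards [Filter.eventually_ge_atTop 0] with s hs
    simp only [Function.comp]
    rw [mul_assoc, ← Real.exp_add]
    gcongr
    nlinarith

lemma bo_int (m n : ℕ) (hm : 0 < m) :
    IntegrableOn (fun r : ℝ => Real.exp (-(m * Real.sqrt (r ^ 4 + 1))) *
      (1 + Real.sqrt (r ^ 4 + 1)) ^ m * r ^ n) (Set.Ioi 0) := by
  have hm1 : (1:ℝ) ≤ m := by exact_mod_cast hm
  have h0 : IntegrableOn (fun r : ℝ => r ^ (n:ℝ) * Real.exp (-(1/2) * r ^ 2)) (Set.Ioi 0) :=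
    integrableOn_rpow_mul_exp_neg_mul_sq (by norm_num) (by
      have : (0:ℝ) ≤ n := Nat.cast_nonneg n
      linarith)
  refine Integrable.mono' (h0.const_mul (2 ^ m)) ?_ ?_
  · apply Continuous.aestronglyMeasurable
    fun_prop
  · filter_upwards [ae_restrict_mem measurableSet_Ioi] with r hr
    have hr0 : (0:ℝ) < r := hr
    rw [Real.norm_of_nonneg (by positivity), Real.rpow_natCast]
    have hs : r ^ 2 ≤ Real.sqrt (r ^ 4 + 1) := Real.le_sqrt_of_sq_le (by nlinarith)
    set s := Real.sqrt (r ^ 4 + 1)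
    have hs0 : 0 ≤ s := le_trans (by positivity) hs
    have h1 : 1 + s ≤ 2 * Real.exp (s / 2) := by
      have := Real.add_one_le_exp (s / 2)
      linarith
    have h2 : (1 + s) ^ m ≤ 2 ^ m * Real.exp (m * (s / 2)) := by
      rw [Real.exp_nat_mul, ← mul_pow]
      gcongr
    have h3 : Real.exp (-(m * s)) * (1 + s) ^ m ≤ 2 ^ m * Real.exp (-(1/2) * r ^ 2) := by
      calc Real.exp (-(m * s)) * (1 + s) ^ m
          ≤ Real.exp (-(m * s)) * (2 ^ m * Real.exp (m * (s / 2))) := by gcongr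
        _ = 2 ^ m * Real.exp (-(m * s) + m * (s / 2)) := by rw [Real.exp_add]; ring
        _ ≤ _ := by
          gcongr
          nlinarith
    calc _ ≤ 2 ^ m * Real.exp (-(1/2) * r ^ 2) * r ^ n := by gcongr
      _ = _ := by ring

lemma bo_main (F F' g : ℝ → ℝ) (hF : ∀ s, 1 ≤ s → HasDerivAt F (F' s) s)
    (hlim : Filter.Tendsto F Filter.atTop (nhds 0)) (hge : ∀ s, 1 ≤ s → s * g s ≤ F' s)
    (hg : IntegrableOn (fun r : ℝ => g (Real.sqrt (r ^ 4 + 1)) * r ^ 3) (Set.Ioi 0)) :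
    ∫ r in Set.Ioi (0:ℝ), g (Real.sqrt (r ^ 4 + 1)) * r ^ 3 ≤ - F 1 / 2 := by
  have hs1 : ∀ r : ℝ, 1 ≤ Real.sqrt (r ^ 4 + 1) := fun r => by
    apply Real.le_sqrt_of_sq_le
    nlinarith [sq_nonneg (r ^ 2)]
  have hd : ∀ r : ℝ, HasDerivAt (fun r : ℝ => F (Real.sqrt (r ^ 4 + 1)) / 2)
      (F' (Real.sqrt (r ^ 4 + 1)) * (4 * r ^ 3 / (2 * Real.sqrt (r ^ 4 + 1))) / 2) r := fun r => by
    have h1 : HasDerivAt (fun r : ℝ => r ^ 4 + 1) (4 * r ^ 3) r := by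
      simpa using (hasDerivAt_pow 4 r).add_const (1:ℝ)
    have h2 := h1.sqrt (by positivity)
    exact ((hF _ (hs1 r)).comp r h2).div_const 2
  have hst : Filter.Tendsto (fun r : ℝ => Real.sqrt (r ^ 4 + 1)) Filter.atTop Filter.atTop := by
    apply Real.tendsto_sqrt_atTop.comp
    exact Filter.tendsto_atTop_add_const_right _ _ (Filter.tendsto_pow_atTop (by norm_num))
  have hl1 := intervalIntegral_tendsto_integral_Ioi 0 hg Filter.tendsto_id
  have hl2 : Filter.Tendsto (fun r : ℝ => F (Real.sqrt (r ^ 4 + 1)) / 2 - F 1 / 2) Filter.atTop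
      (nhds (0 / 2 - F 1 / 2)) := ((hlim.comp hst).div_const 2).sub_const _
  have := le_of_tendsto_of_tendsto hl1 hl2 ?_
  · linarith
  · filter_upwards [Filter.eventually_ge_atTop 0] with R hR
    have h := intervalIntegral.integral_le_sub_of_hasDeriv_right_of_le (a := 0) (b := R)
      (g := fun r : ℝ => F (Real.sqrt (r ^ 4 + 1)) / 2)
      (g' := fun r => F' (Real.sqrt (r ^ 4 + 1)) * (4 * r ^ 3 / (2 * Real.sqrt (r ^ 4 + 1))) / 2)
      (φ := fun r => g (Real.sqrt (r ^ 4 + 1)) * r ^ 3) hR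
      (fun r _ => (hd r).continuousAt.continuousWithinAt)
      (fun r _ => (hd r).hasDerivWithinAt)
      (by
        rw [integrableOn_Icc_iff_integrableOn_Ioc]
        exact hg.mono_set Set.Ioc_subset_Ioi_self)
      (fun r hr => by
        have hr0 : 0 < r := hr.1
        have h1 := hs1 r
        set s := Real.sqrt (r ^ 4 + 1)
        have h2 := hge s h1
        have h3 : 0 < s := by linarith
        have : F' s * (4 * r ^ 3 / (2 * s)) / 2 = (F' s / s) * r ^ 3 := by
          field_simp; ring
        rw [this]
        gcongr
        rw [le_div_iff₀ h3]
        linarith)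
    simpa using h

/-- the comparison function without the exponential weight -/
noncomputable def boK (x C s : ℝ) : ℝ :=
  (x + 1) * (1 + s) ^ 2 + (x + 1) * (3 - 2 * x) / x * (1 + s)
    + ((x + 2) * ((x + 1) * (3 - 2 * x) / x) - 4 * (x + 3) + 2 * x * (x + 1)) / x
    - C * (1 / (x * s) - 1 / (x ^ 2 * s ^ 3) + (2 * s + 3) / (x ^ 3 * s ^ 5))

noncomputable def boK' (x C s : ℝ) : ℝ :=
  2 * (x + 1) * (1 + s) + (x + 1) * (3 - 2 * x) / x
    - C * (-1 / (x * s ^ 2) + 3 / (x ^ 2 * s ^ 4) - (8 * s + 15) / (x ^ 3 * s ^ 6))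

lemma boK_deriv (x C s : ℝ) (hx : 0 < x) (hs : 1 ≤ s) : HasDerivAt (boK x C) (boK' x C s) s := by
  have hs0 : s ≠ 0 := by linarith
  have hx0 := hx.ne'
  have hid := hasDerivAt_id' s
  have e1 := (hid.const_mul x).fun_inv (by positivity)
  have e2 := ((hid.fun_pow 3).const_mul (x ^ 2)).fun_inv (by positivity)
  have e3 := ((hid.const_mul 2).add_const (3:ℝ)).fun_div ((hid.fun_pow 5).const_mul (x ^ 3))
    (by positivity)
  have e4 := (((hid.const_add 1).fun_pow 2).const_mul (x + 1)).fun_add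
    ((hid.const_add 1).const_mul ((x + 1) * (3 - 2 * x) / x))
  have e5 := (e4.add_const (((x + 2) * ((x + 1) * (3 - 2 * x) / x) - 4 * (x + 3)
    + 2 * x * (x + 1)) / x)).fun_sub (((e1.fun_sub e2).fun_add e3).const_mul C)
  refine (e5.congr_deriv ?_).congr_of_eventuallyEq (Filter.Eventually.of_forall fun y => ?_)
  · unfold boK'
    push_cast
    congr 1
    · ring
    · congr 1
      field_simp
      ring
  · simp only [boK, one_div]

lemma boK_ineq (x C s : ℝ) (hx : 0 < x) (hs : 1 ≤ s) (hC : 0 ≤ C)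
    (hC' : (x ^ 3 + x - 6) / x ^ 2 ≤ C) :
    s * (4 * (x + 3) - x * (x + 1) * (s ^ 2 - 1)) ≤
      boK x C s + (1 + s) * boK' x C s - x * s * boK x C s := by
  have hs0 : 0 < s := by linarith
  have : boK x C s + (1 + s) * boK' x C s - x * s * boK x C s
      = s * (4 * (x + 3) - x * (x + 1) * (s ^ 2 - 1)) + (C - (x ^ 3 + x - 6) / x ^ 2)
        + C * ((6 * s ^ 2 + 20 * s + 15) / (x ^ 3 * s ^ 6)) := by
    unfold boK boK'
    field_simp
    ring
  rw [this]
  have : 0 ≤ C * ((6 * s ^ 2 + 20 * s + 15) / (x ^ 3 * s ^ 6)) := by positivity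
  linarith

lemma bo_lt (m : ℕ) (hm : 0 < m) (C : ℝ) (hC : 0 ≤ C)
    (hC' : ((m:ℝ) ^ 3 + m - 6) / (m:ℝ) ^ 2 ≤ C) (hpos : 0 < boK m C 1) :
    4 * ((m : ℝ) + 3) *
        (∫ r in Set.Ioi (0 : ℝ),
          Real.exp (-(m * Real.sqrt (r ^ 4 + 1))) * (1 + Real.sqrt (r ^ 4 + 1)) ^ m * r ^ 3)
      < (m : ℝ) * ((m : ℝ) + 1) *
        ∫ r in Set.Ioi (0 : ℝ),
          Real.exp (-(m * Real.sqrt (r ^ 4 + 1))) * (1 + Real.sqrt (r ^ 4 + 1)) ^ m * r ^ 7 := by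
  have hx : (0:ℝ) < m := by exact_mod_cast hm
  have i3 := (bo_int m 3 hm).const_mul (4 * ((m : ℝ) + 3))
  have i7 := (bo_int m 7 hm).const_mul ((m : ℝ) * ((m : ℝ) + 1))
  have hsub := integral_sub i3 i7
  rw [integral_const_mul, integral_const_mul] at hsub
  have hi := i3.sub i7
  set g : ℝ → ℝ := fun s => Real.exp (-(m * s)) * (1 + s) ^ m *
    (4 * ((m:ℝ) + 3) - m * (m + 1) * (s ^ 2 - 1)) with hg
  have heq : (fun r : ℝ => 4 * ((m : ℝ) + 3) * (Real.exp (-(m * Real.sqrt (r ^ 4 + 1))) *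
      (1 + Real.sqrt (r ^ 4 + 1)) ^ m * r ^ 3) - (m : ℝ) * ((m : ℝ) + 1) *
      (Real.exp (-(m * Real.sqrt (r ^ 4 + 1))) * (1 + Real.sqrt (r ^ 4 + 1)) ^ m * r ^ 7))
      = fun r => g (Real.sqrt (r ^ 4 + 1)) * r ^ 3 := by
    funext r
    simp only [hg]
    rw [Real.sq_sqrt (by positivity)]
    ring
  have hi' : IntegrableOn (fun r : ℝ => g (Real.sqrt (r ^ 4 + 1)) * r ^ 3) (Set.Ioi 0) := by
    rw [← heq]; exact hi
  rw [heq] at hsub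
  have key := bo_main (fun s => (1 + s) ^ (m + 1) * Real.exp (-(m * s)) * boK m C s)
    (fun s => Real.exp (-(m * s)) * (1 + s) ^ m *
      (boK m C s + (1 + s) * boK' m C s - m * s * boK m C s)) g ?_ ?_ ?_ hi'
  · have : 0 < (1 + 1 : ℝ) ^ (m + 1) * Real.exp (-(m * 1)) * boK m C 1 := by positivity
    rw [hsub] at key
    apply sub_neg.mp
    refine lt_of_le_of_lt key ?_
    generalize (1 + 1 : ℝ) ^ (m + 1) * Real.exp (-(m * 1)) * boK m C 1 = y at this
    linarith
  · intro s hs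
    have hid := hasDerivAt_id' s
    have e1 := (hid.const_add 1).fun_pow (m + 1)
    have e2 := (hid.const_mul (m:ℝ)).fun_neg.exp
    refine ((e1.fun_mul e2).fun_mul (boK_deriv m C s hx hs)).congr_deriv ?_
    push_cast
    ring
  · have hinv : Filter.Tendsto (fun s : ℝ => s⁻¹) Filter.atTop (nhds 0) := tendsto_inv_atTop_zero
    have l1 := bo_lim m (m + 1) hm
    have l2 := bo_lim m (m + 2) hm
    have l3 := bo_lim m (m + 3) hm
    have hR := ((((hinv.const_mul (1 / (m:ℝ))).sub ((hinv.pow 3).const_mul (1 / (m:ℝ) ^ 2))).add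
      ((hinv.pow 4).const_mul (2 / (m:ℝ) ^ 3))).add
      ((hinv.pow 5).const_mul (3 / (m:ℝ) ^ 3))).const_mul C
    have hT := (((l3.const_mul ((m:ℝ) + 1)).add
      (l2.const_mul (((m:ℝ) + 1) * (3 - 2 * m) / m))).add
      (l1.const_mul ((((m:ℝ) + 2) * ((m + 1) * (3 - 2 * m) / m) - 4 * (m + 3)
        + 2 * m * (m + 1)) / m))).sub (l1.mul hR)
    simp only [mul_zero, zero_mul, add_zero, sub_zero] at hT
    refine hT.congr' ?_
    filter_upwards [Filter.eventually_gt_atTop 0] with s hs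
    unfold boK
    have : 1 / ((m:ℝ) * s) - 1 / ((m:ℝ) ^ 2 * s ^ 3) + (2 * s + 3) / ((m:ℝ) ^ 3 * s ^ 5)
      = 1 / (m:ℝ) * s⁻¹ - 1 / (m:ℝ) ^ 2 * s⁻¹ ^ 3 + 2 / (m:ℝ) ^ 3 * s⁻¹ ^ 4
        + 3 / (m:ℝ) ^ 3 * s⁻¹ ^ 5 := by
      field_simp
      ring
    rw [this]
    ring
  · intro s hs
    have := boK_ineq m C s hx hs hC hC'
    have hp : 0 ≤ Real.exp (-(m * s)) * (1 + s) ^ m := by positivity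
    calc s * g s = Real.exp (-(m * s)) * (1 + s) ^ m *
          (s * (4 * ((m:ℝ) + 3) - m * (m + 1) * (s ^ 2 - 1))) := by simp only [hg]; ring
      _ ≤ _ := mul_le_mul_of_nonneg_left this hp

/-- For every positive integer `m`,
`4(m+3) ∫₀^∞ e^{-m√(r⁴+1)}(1+√(r⁴+1))^m r³ dr ≠ m(m+1) ∫₀^∞ e^{-m√(r⁴+1)}(1+√(r⁴+1))^m r⁷ dr`,
the obstruction to the balanced condition for `m·g_EH`. -/
theorem balanced_obstruction_integrals (m : ℕ) (hm : 0 < m) :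
    4 * ((m : ℝ) + 3) *
        ∫ r in Set.Ioi (0 : ℝ),
          Real.exp (-(m * Real.sqrt (r ^ 4 + 1))) * (1 + Real.sqrt (r ^ 4 + 1)) ^ m * r ^ 3
      ≠ (m : ℝ) * ((m : ℝ) + 1) *
        ∫ r in Set.Ioi (0 : ℝ),
          Real.exp (-(m * Real.sqrt (r ^ 4 + 1))) * (1 + Real.sqrt (r ^ 4 + 1)) ^ m * r ^ 7 := by
  apply ne_of_lt
  rcases Nat.lt_or_ge m 2 with h | h
  · have : m = 1 := by omega
    subst this
    exact bo_lt 1 one_pos 0 le_rfl (by norm_num) (by norm_num [boK])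
  · have h2 : (2:ℝ) ≤ m := by exact_mod_cast h
    have hx : (0:ℝ) < m := by linarith
    have h3 : (0:ℝ) ≤ (m:ℝ) ^ 3 + m - 6 := by nlinarith [sq_nonneg ((m:ℝ) - 2), sq_nonneg (m:ℝ)]
    refine bo_lt m hm (((m:ℝ) ^ 3 + m - 6) / (m:ℝ) ^ 2) (by positivity) le_rfl ?_
    have : boK m (((m:ℝ) ^ 3 + m - 6) / (m:ℝ) ^ 2) 1
        = (7 * (m:ℝ) ^ 2 - 11 * m + 30) / (m:ℝ) ^ 5 := by
      unfold boK
      field_simp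
      ring
    rw [this]
    apply div_pos _ (by positivity)
    nlinarith
end
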